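/- arXiv:2211.07952 — 3 statements merged into one kernel-verified Lean document; each statement's English description precedes it below -/
import Mathlib

section
/- For every density operator ρ on a finite-dimensional six-partite Hilbert space H^A⊗H^B⊗H^C⊗H^D⊗H^E⊗H^F, one has I'(AB:CD:EF) ≥ I'(AB:C:E), i.e., S(ABCD) + S(ABEF) + S(CDEF) − 2S(ABCDEF) ≥ S(ABC) + S(ABE) + S(CE) − 2S(ABCE). -/
open scoped BigOperators ComplexOrder
open Matrix

noncomputable section

/-- The function `x ↦ -x·log₂ x` (with the convention `0·log₂ 0 = 0`). -/
def negxlog2 (x : ℝ) : ℝ := -(x * Real.logb 2 x)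

/-- The von Neumann entropy (base 2), `S(ρ) = -Tr(ρ log₂ ρ)`, computed as the sum of
`-λ log₂ λ` over the eigenvalues of a Hermitian matrix (junk value `0` otherwise). -/
def vnEntropy {n : Type} [Fintype n] [DecidableEq n] (ρ : Matrix n n ℂ) : ℝ :=
  if h : ρ.IsHermitian then ∑ i, negxlog2 (h.eigenvalues i) else 0

/-- The Tsallis q-entropy `S_q(ρ) = (1 - Tr ρ^q)/(q-1)`, computed via eigenvalues. -/
def tsallisEntropy (q : ℝ) {n : Type} [Fintype n] [DecidableEq n] (ρ : Matrix n n ℂ) : ℝ :=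
  if h : ρ.IsHermitian then (1 - ∑ i, (h.eigenvalues i) ^ q) / (q - 1) else 0

/-- A density operator: positive semidefinite with unit trace. -/
def IsDensity {n : Type} [Fintype n] [DecidableEq n] (ρ : Matrix n n ℂ) : Prop :=
  ρ.PosSemidef ∧ ρ.trace = 1

/-- rank-one projection `|ψ⟩⟨ψ|`. -/
def outer {α : Type} (ψ : α → ℂ) : Matrix α α ℂ :=
  fun a b => ψ a * (starRingEnd ℂ) (ψ b)

section multi

variable {ι : Type} [Fintype ι] [DecidableEq ι] {d : ι → Type}
  [∀ i, Fintype (d i)] [∀ i, DecidableEq (d i)]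

/-- Combine an assignment of basis indices on the parties in `s` with one on the
complementary parties. -/
def combine (s : Finset ι) (x : (i : {j // j ∈ s}) → d i.1) (z : (i : {j // j ∉ s}) → d i.1)
    (i : ι) : d i :=
  if h : i ∈ s then x ⟨i, h⟩ else z ⟨i, h⟩

/-- The reduced state on the parties in `s`: partial trace over the complementary parties. -/
def pTr (ρ : Matrix (∀ i, d i) (∀ i, d i) ℂ) (s : Finset ι) :
    Matrix ((i : {j // j ∈ s}) → d i.1) ((i : {j // j ∈ s}) → d i.1) ℂ :=
  fun x y => ∑ z : (i : {j // j ∉ s}) → d i.1, ρ (combine s x z) (combine s y z)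

/-- von Neumann entropy of the reduced state on `s`. -/
def Sv (ρ : Matrix (∀ i, d i) (∀ i, d i) ℂ) (s : Finset ι) : ℝ := vnEntropy (pTr ρ s)

/-- Tsallis q-entropy of the reduced state on `s`. -/
def Sq (q : ℝ) (ρ : Matrix (∀ i, d i) (∀ i, d i) ℂ) (s : Finset ι) : ℝ :=
  tsallisEntropy q (pTr ρ s)

/-- Multipartite quantum mutual information `I(X₁:⋯:X_k) = Σ_s S(X_s) - S(X₁⋯X_k)` of a
partition `P` (each block a finset of parties, treated as a single party). -/
def MI (ρ : Matrix (∀ i, d i) (∀ i, d i) ℂ) (P : Finset (Finset ι)) : ℝ :=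
  (∑ X ∈ P, Sv ρ X) - Sv ρ (P.sup id)

/-- Dual multipartite quantum mutual information
`I'(X₁:⋯:X_k) = Σ_s S(X̄_s) - (k-1) S(X₁⋯X_k)`, where `X̄_s` is the union of all blocks
other than `X_s`. -/
def MI' (ρ : Matrix (∀ i, d i) (∀ i, d i) ℂ) (P : Finset (Finset ι)) : ℝ :=
  (∑ X ∈ P, Sv ρ (P.sup id \ X)) - ((P.card : ℝ) - 1) * Sv ρ (P.sup id)

/-- Tsallis multipartite quantum mutual information. -/
def MIq (q : ℝ) (ρ : Matrix (∀ i, d i) (∀ i, d i) ℂ) (P : Finset (Finset ι)) : ℝ :=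
  (∑ X ∈ P, Sq q ρ X) - Sq q ρ (P.sup id)

/-- Tsallis dual multipartite quantum mutual information. -/
def MIq' (q : ℝ) (ρ : Matrix (∀ i, d i) (∀ i, d i) ℂ) (P : Finset (Finset ι)) : ℝ :=
  (∑ X ∈ P, Sq q ρ (P.sup id \ X)) - ((P.card : ℝ) - 1) * Sq q ρ (P.sup id)

/-- The finest partition of the set `s` of parties: each party its own block. -/
def finest (s : Finset ι) : Finset (Finset ι) := s.image fun i => {i}

end multi

/-- A partition (of a subsystem): nonempty pairwise disjoint blocks. -/
def IsPartition {ι : Type} [DecidableEq ι] (P : Finset (Finset ι)) : Prop :=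
  (∀ X ∈ P, X.Nonempty) ∧ (P : Set (Finset ι)).PairwiseDisjoint id

/-- One coarsening step: (a) discarding whole blocks, (b) merging blocks into one block,
(c) discarding some parties from within a block containing at least two parties. -/
inductive CoarserStep {ι : Type} [DecidableEq ι] : Finset (Finset ι) → Finset (Finset ι) → Prop
  | discard {P Q : Finset (Finset ι)} (hQP : Q ⊆ P) (hQ : Q.Nonempty) : CoarserStep P Q
  | merge (P T : Finset (Finset ι)) (hT : T ⊆ P) (hT' : T.Nonempty) :
      CoarserStep P (insert (T.sup id) (P \ T))
  | shrink (P : Finset (Finset ι)) (X X' : Finset ι) (hX : X ∈ P) (h2 : 2 ≤ X.card)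
      (hsub : X' ⊆ X) (hne : X'.Nonempty) : CoarserStep P (insert X' (P.erase X))

/-- `Coarser P Q` : the partition `Q` is coarser than `P` (`P ≻ Q`). -/
def Coarser {ι : Type} [DecidableEq ι] (P Q : Finset (Finset ι)) : Prop :=
  Relation.ReflTransGen CoarserStep P Q

end

/-!
Shrinking one block `X` of a family of disjoint blocks lowers `I'`: writing `R` for the union of
the other blocks, `I'` is `S(R)` plus the sum over the other blocks `Y` of
`S(X ∪ (R \ Y)) - S(X ∪ R)`, and each summand is monotone in `X` by strong subadditivity. The
theorem is two such steps, `CD` to `C` and `EF` to `E`.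

Strong subadditivity is the monotonicity of the relative entropy `D(ρ^{XY} ‖ ρ^X ⊗ 1)` under
partial traces over parts of `X`. For positive `ρ` and `σ`, the derivative in `t` of
`Tr(ρ log(σ + t ρ))`, with `σ` acting from the right and `ρ` from the left, is `Tr(ρ W)` for the
solution `W` of the Sylvester equation `W σ + t ρ W = ρ`, hence the maximum over `Z` of
`2 Re Tr(ρ Z) - Tr(σ Z* Z) - t Tr(ρ Z Z*)`. Restricting `Z` to the observables of a subsystem only
lowers the maximum, and integrating over `0 < t < ∞` compares the relative entropies.
-/

section PosSemidef

variable {n : Type*} [Fintype n]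

open scoped MatrixOrder in
lemma exists_eq_conjTranspose_mul_self {ρ : Matrix n n ℂ} (hρ : ρ.PosSemidef) :
    ∃ B : Matrix n n ℂ, ρ = Bᴴ * B := by
  classical exact CStarAlgebra.nonneg_iff_eq_star_mul_self.mp hρ.nonneg

lemma trace_mul_conjTranspose_mul_self_nonneg {ρ : Matrix n n ℂ} (hρ : ρ.PosSemidef)
    (X : Matrix n n ℂ) : 0 ≤ trace (ρ * (Xᴴ * X)) := by
  rw [← Matrix.mul_assoc, trace_mul_comm, ← Matrix.mul_assoc]
  exact (hρ.mul_mul_conjTranspose_same X).trace_nonneg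

lemma mul_eq_zero_iff_trace_mul_mul_conjTranspose {ρ : Matrix n n ℂ} (hρ : ρ.PosSemidef)
    (X : Matrix n n ℂ) : ρ * X = 0 ↔ trace (ρ * (X * Xᴴ)) = 0 := by
  refine ⟨fun h => by rw [← Matrix.mul_assoc, h, Matrix.zero_mul, trace_zero], fun h => ?_⟩
  obtain ⟨B, rfl⟩ := exists_eq_conjTranspose_mul_self hρ
  have hBX : trace ((B * X)ᴴ * (B * X)) = 0 := by
    rw [← h, conjTranspose_mul, trace_mul_comm]
    simp only [Matrix.mul_assoc]
    rw [trace_mul_comm Bᴴ]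
    simp only [Matrix.mul_assoc]
  rw [Matrix.mul_assoc, trace_conjTranspose_mul_self_eq_zero_iff.1 hBX, Matrix.mul_zero]

end PosSemidef

section FunctionalCalculus

variable {n : Type*} [Fintype n] [DecidableEq n] {τ : Matrix n n ℂ}

lemma mul_cfc_self (hτ : τ.IsHermitian) (f : ℝ → ℝ) : τ * cfc f τ = cfc (fun x => x * f x) τ := by
  have hτ' : IsSelfAdjoint τ := hτ
  rw [cfc_mul _ f τ (finite_real_spectrum.continuousOn _) (finite_real_spectrum.continuousOn f),
    cfc_id' ℝ τ]

lemma cfc_mul_self (hτ : τ.IsHermitian) (f : ℝ → ℝ) : cfc f τ * τ = cfc (fun x => f x * x) τ := by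
  have hτ' : IsSelfAdjoint τ := hτ
  rw [cfc_mul f _ τ (finite_real_spectrum.continuousOn f) (finite_real_spectrum.continuousOn _),
    cfc_id' ℝ τ]

lemma mul_cfc_inv_mul_self (hτ : τ.IsHermitian) : τ * cfc (·⁻¹ : ℝ → ℝ) τ * τ = τ := by
  have hτ' : IsSelfAdjoint τ := hτ
  rw [mul_cfc_self hτ, cfc_mul_self hτ]
  simp only [mul_inv_mul_cancel, cfc_id' ℝ τ]

lemma mul_cfc_indicator_zero (hτ : τ.IsHermitian) :
    τ * cfc (({0} : Set ℝ).indicator 1) τ = 0 := by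
  have hzero (x : ℝ) : x * ({0} : Set ℝ).indicator 1 x = 0 := by by_cases hx : x = 0 <;> simp [hx]
  simp only [mul_cfc_self hτ, hzero, cfc_const_zero]

lemma trace_cfc (hτ : τ.IsHermitian) (f : ℝ → ℝ) :
    trace (cfc f τ) = ∑ i, (f (hτ.eigenvalues i) : ℂ) := by
  rw [hτ.cfc_eq, IsHermitian.cfc, Unitary.conjStarAlgAut_apply, trace_mul_comm, ← Matrix.mul_assoc,
    Unitary.coe_star_mul_self, Matrix.one_mul, trace_diagonal]
  rfl

end FunctionalCalculus

section StarAlgHom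

variable {m n : Type*} [Fintype m] [DecidableEq m] [Fintype n] [DecidableEq n]

lemma starAlgHom_conjTranspose (φ : Matrix m m ℂ →⋆ₐ[ℂ] Matrix n n ℂ) (X : Matrix m m ℂ) :
    φ Xᴴ = (φ X)ᴴ :=
  map_star φ X

lemma posSemidef_map_starAlgHom (φ : Matrix m m ℂ →⋆ₐ[ℂ] Matrix n n ℂ) {τ : Matrix m m ℂ}
    (hτ : τ.PosSemidef) : (φ τ).PosSemidef := by
  obtain ⟨B, rfl⟩ := exists_eq_conjTranspose_mul_self hτ
  rw [map_mul, starAlgHom_conjTranspose]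
  exact posSemidef_conjTranspose_mul_self _

lemma map_cfc_starAlgHom (φ : Matrix m m ℂ →⋆ₐ[ℂ] Matrix n n ℂ) {τ : Matrix m m ℂ}
    (hτ : τ.IsHermitian) (f : ℝ → ℝ) : φ (cfc f τ) = cfc f (φ τ) := by
  have hφτ : IsSelfAdjoint (φ τ) := IsSelfAdjoint.map hτ φ
  exact StarAlgHom.map_cfc (φ.restrictScalars ℝ) f τ (finite_real_spectrum.continuousOn f)
    (LinearMap.continuous_of_finiteDimensional φ.toAlgHom.toLinearMap) hτ hφτ

end StarAlgHom

section TraceDual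

variable {l m n : Type*} [Fintype l] [DecidableEq l] [Fintype m] [DecidableEq m] [Fintype n]
  [DecidableEq n]

/-- The adjoint of `φ` for the trace pairing `(ρ, X) ↦ Tr(ρ X)`. When `φ` embeds the observables
of a subsystem, this is the passage to the reduced state. -/
def traceDual (φ : Matrix m m ℂ →⋆ₐ[ℂ] Matrix n n ℂ) (ρ : Matrix n n ℂ) : Matrix m m ℂ :=
  of fun x y => trace (ρ * φ (single y x 1))

lemma trace_traceDual_mul (φ : Matrix m m ℂ →⋆ₐ[ℂ] Matrix n n ℂ) (ρ : Matrix n n ℂ)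
    (X : Matrix m m ℂ) : trace (traceDual φ ρ * X) = trace (ρ * φ X) := by
  induction X using Matrix.induction_on' with
  | h_zero => simp
  | h_add X Y hX hY => simp only [mul_add, map_add, trace_add, hX, hY]
  | h_std_basis y x c =>
    have hc : single y x c = c • single y x (1 : ℂ) := by simp [smul_single]
    rw [hc, map_smul, mul_smul_comm, mul_smul_comm, trace_smul, trace_smul, trace_mul_single]
    simp [traceDual]

lemma traceDual_eq_iff {φ : Matrix m m ℂ →⋆ₐ[ℂ] Matrix n n ℂ} {ρ : Matrix n n ℂ}
    {τ : Matrix m m ℂ} : traceDual φ ρ = τ ↔ ∀ X, trace (ρ * φ X) = trace (τ * X) := by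
  simp only [ext_iff_trace_mul_right, trace_traceDual_mul]

lemma traceDual_traceDual (φ : Matrix m m ℂ →⋆ₐ[ℂ] Matrix n n ℂ)
    (χ : Matrix l l ℂ →⋆ₐ[ℂ] Matrix m m ℂ) (ρ : Matrix n n ℂ) :
    traceDual χ (traceDual φ ρ) = traceDual (φ.comp χ) ρ :=
  traceDual_eq_iff.2 fun X => by
    rw [trace_traceDual_mul, trace_traceDual_mul, StarAlgHom.comp_apply]

lemma trace_traceDual (φ : Matrix m m ℂ →⋆ₐ[ℂ] Matrix n n ℂ) (ρ : Matrix n n ℂ) :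
    trace (traceDual φ ρ) = trace ρ := by
  simpa only [mul_one, map_one] using trace_traceDual_mul φ ρ 1

lemma posSemidef_traceDual (φ : Matrix m m ℂ →⋆ₐ[ℂ] Matrix n n ℂ) {ρ : Matrix n n ℂ}
    (hρ : ρ.PosSemidef) : (traceDual φ ρ).PosSemidef := by
  refine .of_dotProduct_mulVec_nonneg ?_ fun v => ?_
  · ext x y
    rw [conjTranspose_apply, traceDual, of_apply, of_apply, ← trace_conjTranspose,
      conjTranspose_mul, hρ.isHermitian.eq, ← starAlgHom_conjTranspose, conjTranspose_single,
      star_one, trace_mul_comm]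
  · obtain ⟨B, hB⟩ := exists_eq_conjTranspose_mul_self (posSemidef_vecMulVec_self_star v)
    have hv : star v ⬝ᵥ traceDual φ ρ *ᵥ v = trace (ρ * ((φ B)ᴴ * φ B)) := by
      rw [← starAlgHom_conjTranspose, ← map_mul, ← hB, ← trace_traceDual_mul,
        mul_vecMulVec, trace_vecMulVec, dotProduct_comm]
    exact hv ▸ trace_mul_conjTranspose_mul_self_nonneg hρ (φ B)

end TraceDual

section Support

variable {m n : Type*} [Fintype n]

/-- The support of `ρ` is contained in that of `σ`, equivalently `ker σ ≤ ker ρ`. It is phrased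
through right multiplication so that it can be transported along algebra homomorphisms. -/
def SupportLE (ρ σ : Matrix n n ℂ) : Prop :=
  ∀ X : Matrix n n ℂ, σ * X = 0 → ρ * X = 0

variable [DecidableEq n] [Fintype m] [DecidableEq m]

lemma supportLE_traceDual (φ : Matrix m m ℂ →⋆ₐ[ℂ] Matrix n n ℂ) {ρ σ : Matrix n n ℂ}
    (hρ : ρ.PosSemidef) (hσ : σ.PosSemidef) (h : SupportLE ρ σ) :
    SupportLE (traceDual φ ρ) (traceDual φ σ) := by
  intro X hX
  rw [mul_eq_zero_iff_trace_mul_mul_conjTranspose (posSemidef_traceDual φ ‹_›), trace_traceDual_mul,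
    map_mul, starAlgHom_conjTranspose, ← mul_eq_zero_iff_trace_mul_mul_conjTranspose ‹_›] at hX ⊢
  exact h _ hX

lemma supportLE_map_traceDual (φ : Matrix m m ℂ →⋆ₐ[ℂ] Matrix n n ℂ) {ρ : Matrix n n ℂ}
    (hρ : ρ.PosSemidef) : SupportLE ρ (φ (traceDual φ ρ)) := by
  intro X hX
  set τ := traceDual φ ρ
  set τinv : Matrix m m ℂ := cfc (·⁻¹ : ℝ → ℝ) τ
  have hinv : τ * τinv * τ = τ := mul_cfc_inv_mul_self (posSemidef_traceDual φ hρ).isHermitian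
  have hker : τ * (1 - τinv * τ) = 0 := by
    rw [Matrix.mul_sub, Matrix.mul_one, ← Matrix.mul_assoc, hinv, sub_self]
  have hφker : ρ * φ (1 - τinv * τ) = 0 := by
    rwa [mul_eq_zero_iff_trace_mul_mul_conjTranspose hρ, ← starAlgHom_conjTranspose, ← map_mul,
      ← trace_traceDual_mul,
      ← mul_eq_zero_iff_trace_mul_mul_conjTranspose (posSemidef_traceDual φ hρ)]
  have hXker : φ (1 - τinv * τ) * X = X := by
    rw [map_sub, map_one, map_mul, Matrix.sub_mul, Matrix.one_mul, Matrix.mul_assoc, hX,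
      Matrix.mul_zero, sub_zero]
  rw [← hXker, ← Matrix.mul_assoc, hφker, Matrix.zero_mul]

end Support

section JointCfc

variable {n : Type*} [Fintype n] [DecidableEq n] {ρ σ : Matrix n n ℂ}

/-- The operator `h(L_ρ, R_σ)(1)`, where `L_ρ` and `R_σ` are the commuting operators of left
multiplication by `ρ` and right multiplication by `σ`; it is `f(ρ) g(σ)` when
`h p q = f p * g q`. -/
noncomputable def jointCfc (hρ : ρ.IsHermitian) (hσ : σ.IsHermitian) (h : ℝ → ℝ → ℝ) :
    Matrix n n ℂ :=
  hρ.eigenvectorUnitary *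
    (of fun a b => (h (hρ.eigenvalues a) (hσ.eigenvalues b) : ℂ) *
      (star hρ.eigenvectorUnitary.1 * hσ.eigenvectorUnitary.1) a b) *
    star hσ.eigenvectorUnitary.1

/-- The squared overlap `|⟨u_a, v_b⟩|²` of the `a`-th eigenvector of `ρ` with the `b`-th
eigenvector of `σ`. -/
noncomputable def eigenOverlap (hρ : ρ.IsHermitian) (hσ : σ.IsHermitian) (a b : n) : ℝ :=
  Complex.normSq ((star hρ.eigenvectorUnitary.1 * hσ.eigenvectorUnitary.1) a b)

/-- The trace of `jointCfc hρ hσ h`, as the sum of `h` over all pairs of eigenvalues of `ρ` and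
`σ` weighted by the overlaps of the eigenvectors. -/
noncomputable def jointTrace (hρ : ρ.IsHermitian) (hσ : σ.IsHermitian) (h : ℝ → ℝ → ℝ) : ℝ :=
  ∑ a, ∑ b, eigenOverlap hρ hσ a b * h (hρ.eigenvalues a) (hσ.eigenvalues b)

variable (hρ : ρ.IsHermitian) (hσ : σ.IsHermitian)

lemma eigenOverlap_nonneg (a b : n) : 0 ≤ eigenOverlap hρ hσ a b :=
  Complex.normSq_nonneg _

lemma trace_jointCfc (h : ℝ → ℝ → ℝ) : trace (jointCfc hρ hσ h) = jointTrace hρ hσ h := by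
  have hW : star hσ.eigenvectorUnitary.1 * hρ.eigenvectorUnitary.1 =
      (star hρ.eigenvectorUnitary.1 * hσ.eigenvectorUnitary.1)ᴴ := by
    rw [← star_eq_conjTranspose, star_mul, star_star]
  rw [jointCfc, Matrix.mul_assoc, trace_mul_comm, Matrix.mul_assoc, hW]
  simp only [trace, diag_apply, mul_apply (M := of _), of_apply, conjTranspose_apply, jointTrace,
    eigenOverlap, Complex.ofReal_sum, Complex.ofReal_mul, Complex.normSq_eq_conj_mul_self]
  refine Finset.sum_congr rfl fun a _ => Finset.sum_congr rfl fun b _ => ?_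
  rw [Complex.star_def]
  ring

lemma jointCfc_congr {h k : ℝ → ℝ → ℝ}
    (hhk : ∀ a b, h (hρ.eigenvalues a) (hσ.eigenvalues b) =
      k (hρ.eigenvalues a) (hσ.eigenvalues b)) :
    jointCfc hρ hσ h = jointCfc hρ hσ k := by
  simp only [jointCfc, hhk]

lemma smul_jointCfc (c : ℝ) (h : ℝ → ℝ → ℝ) :
    (c : ℂ) • jointCfc hρ hσ h = jointCfc hρ hσ fun p q => c * h p q := by
  rw [jointCfc, jointCfc, ← Matrix.smul_mul, ← Matrix.mul_smul]
  congr 2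
  ext a b
  simp only [Matrix.smul_apply, of_apply, smul_eq_mul, Complex.ofReal_mul, mul_assoc]

lemma jointCfc_add (h k : ℝ → ℝ → ℝ) :
    jointCfc hρ hσ h + jointCfc hρ hσ k = jointCfc hρ hσ fun p q => h p q + k p q := by
  simp only [jointCfc, ← Matrix.add_mul, ← Matrix.mul_add]
  congr 2
  ext a b
  simp only [Matrix.add_apply, of_apply, Complex.ofReal_add, add_mul]

lemma cfc_mul_jointCfc (f : ℝ → ℝ) (h : ℝ → ℝ → ℝ) :
    cfc f ρ * jointCfc hρ hσ h = jointCfc hρ hσ fun p q => f p * h p q := by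
  rw [hρ.cfc_eq]
  simp only [jointCfc, IsHermitian.cfc, Unitary.conjStarAlgAut_apply, Matrix.mul_assoc]
  rw [← Matrix.mul_assoc (star _ : Matrix n n ℂ) hρ.eigenvectorUnitary.1]
  simp only [Unitary.coe_star_mul_self, Matrix.one_mul]
  rw [← Matrix.mul_assoc (diagonal _)]
  congr 2
  ext a b
  simp [diagonal_mul, mul_assoc]

lemma jointCfc_mul_cfc (h : ℝ → ℝ → ℝ) (g : ℝ → ℝ) :
    jointCfc hρ hσ h * cfc g σ = jointCfc hρ hσ fun p q => h p q * g q := by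
  rw [hσ.cfc_eq]
  simp only [jointCfc, IsHermitian.cfc, Unitary.conjStarAlgAut_apply, Matrix.mul_assoc]
  rw [← Matrix.mul_assoc (star _ : Matrix n n ℂ) hσ.eigenvectorUnitary.1]
  simp only [Unitary.coe_star_mul_self, Matrix.one_mul]
  rw [← Matrix.mul_assoc (of _)]
  congr 2
  ext a b
  simp [mul_diagonal, mul_right_comm]

lemma jointCfc_one : jointCfc hρ hσ (fun _ _ => 1) = 1 := by
  have hW : (of fun a b => ((1 : ℝ) : ℂ) *
      (star hρ.eigenvectorUnitary.1 * hσ.eigenvectorUnitary.1) a b) =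
      star hρ.eigenvectorUnitary.1 * hσ.eigenvectorUnitary.1 := by
    ext a b
    simp only [of_apply, Complex.ofReal_one, one_mul]
  rw [jointCfc, hW, ← Matrix.mul_assoc, Unitary.mul_star_self_of_mem (Subtype.prop _),
    Matrix.one_mul, Unitary.mul_star_self_of_mem (Subtype.prop _)]

lemma cfc_eq_jointCfc_left (f : ℝ → ℝ) : cfc f ρ = jointCfc hρ hσ fun p _ => f p := by
  simpa only [jointCfc_one, mul_one] using cfc_mul_jointCfc hρ hσ f fun _ _ => 1

lemma cfc_eq_jointCfc_right (g : ℝ → ℝ) : cfc g σ = jointCfc hρ hσ fun _ q => g q := by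
  simpa only [jointCfc_one, one_mul] using jointCfc_mul_cfc hρ hσ (fun _ _ => 1) g

lemma mul_jointCfc (h : ℝ → ℝ → ℝ) :
    ρ * jointCfc hρ hσ h = jointCfc hρ hσ fun p q => p * h p q := by
  have hρ' : IsSelfAdjoint ρ := hρ
  simpa only [cfc_id' ℝ ρ] using cfc_mul_jointCfc hρ hσ (fun p => p) h

lemma jointCfc_mul (h : ℝ → ℝ → ℝ) :
    jointCfc hρ hσ h * σ = jointCfc hρ hσ fun p q => h p q * q := by
  have hσ' : IsSelfAdjoint σ := hσ
  simpa only [cfc_id' ℝ σ] using jointCfc_mul_cfc hρ hσ h fun q => q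

lemma re_trace_mul_cfc_left (f : ℝ → ℝ) :
    (trace (ρ * cfc f ρ)).re = jointTrace hρ hσ fun p _ => p * f p := by
  rw [cfc_eq_jointCfc_left hρ hσ, mul_jointCfc, trace_jointCfc, Complex.ofReal_re]

lemma re_trace_mul_cfc_right (g : ℝ → ℝ) :
    (trace (ρ * cfc g σ)).re = jointTrace hρ hσ fun p q => p * g q := by
  rw [cfc_eq_jointCfc_right hρ hσ, mul_jointCfc, trace_jointCfc, Complex.ofReal_re]

lemma jointCfc_fst : jointCfc hρ hσ (fun p _ => p) = ρ := by
  simpa only [jointCfc_one, mul_one] using (mul_jointCfc hρ hσ fun _ _ => 1).symm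

lemma re_trace_eq_jointTrace : (trace ρ).re = jointTrace hρ hσ fun p _ => p := by
  rw [← Complex.ofReal_re (jointTrace _ _ _), ← trace_jointCfc, jointCfc_fst]

end JointCfc

section EigenSupport

variable {n : Type*} [Fintype n] [DecidableEq n] {ρ σ : Matrix n n ℂ}

lemma eigenOverlap_mul_eigenvalues_eq_zero (hρ : ρ.PosSemidef) (hσ : σ.IsHermitian)
    (h : SupportLE ρ σ) (a b : n) (hb : hσ.eigenvalues b = 0) :
    eigenOverlap hρ.isHermitian hσ a b * hρ.isHermitian.eigenvalues a = 0 := by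
  have hsum : ∑ a, ∑ b, eigenOverlap hρ.isHermitian hσ a b *
      (hρ.isHermitian.eigenvalues a * ({0} : Set ℝ).indicator 1 (hσ.eigenvalues b)) = 0 := by
    refine (re_trace_mul_cfc_right hρ.isHermitian hσ _).symm.trans ?_
    rw [h _ (mul_cfc_indicator_zero hσ), trace_zero, Complex.zero_re]
  have hnonneg (a b : n) : 0 ≤ eigenOverlap hρ.isHermitian hσ a b *
      (hρ.isHermitian.eigenvalues a * ({0} : Set ℝ).indicator 1 (hσ.eigenvalues b)) :=
    mul_nonneg (eigenOverlap_nonneg _ _ a b) <|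
      mul_nonneg (hρ.eigenvalues_nonneg a) (Set.indicator_nonneg (fun _ _ => zero_le_one) _)
  have hrow := (Finset.sum_eq_zero_iff_of_nonneg fun a _ =>
    Finset.sum_nonneg fun b _ => hnonneg a b).1 hsum a (Finset.mem_univ a)
  simpa [hb] using (Finset.sum_eq_zero_iff_of_nonneg fun b _ => hnonneg a b).1 hrow b
    (Finset.mem_univ b)

end EigenSupport

section Sylvester

variable {m n : Type*} [Fintype n]

/-- The quadratic form `⟨X, X σ + t ρ X⟩` of the Sylvester operator `X ↦ X σ + t ρ X` for the
Hilbert-Schmidt inner product. -/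
noncomputable def sylvesterForm (t : ℝ) (ρ σ X : Matrix n n ℂ) : ℝ :=
  (trace (σ * (Xᴴ * X))).re + t * (trace (ρ * (X * Xᴴ))).re

lemma sylvesterForm_zero (t : ℝ) (ρ σ : Matrix n n ℂ) : sylvesterForm t ρ σ 0 = 0 := by
  simp [sylvesterForm]

lemma sylvesterForm_nonneg {t : ℝ} (ht : 0 ≤ t) {ρ σ : Matrix n n ℂ} (hρ : ρ.PosSemidef)
    (hσ : σ.PosSemidef) (X : Matrix n n ℂ) : 0 ≤ sylvesterForm t ρ σ X := by
  refine add_nonneg ?_ (mul_nonneg ht ?_)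
  · exact (Complex.nonneg_iff.1 (trace_mul_conjTranspose_mul_self_nonneg hσ X)).1
  · simpa only [conjTranspose_conjTranspose] using
      (Complex.nonneg_iff.1 (trace_mul_conjTranspose_mul_self_nonneg hρ Xᴴ)).1

lemma sylvesterForm_sub {t : ℝ} {ρ σ X : Matrix n n ℂ} (hρ : ρ.IsHermitian) (hσ : σ.IsHermitian)
    (hX : X * σ + (t : ℂ) • (ρ * X) = ρ) (Z : Matrix n n ℂ) :
    sylvesterForm t ρ σ (X - Z) =
      sylvesterForm t ρ σ X - 2 * (trace (ρ * Z)).re + sylvesterForm t ρ σ Z := by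
  have re_trace_star (A : Matrix n n ℂ) : (trace Aᴴ).re = (trace A).re := by
    rw [trace_conjTranspose, Complex.star_def, Complex.conj_re]
  have hσsymm : (trace (σ * (Xᴴ * Z))).re = (trace (σ * (Zᴴ * X))).re := by
    rw [← re_trace_star, conjTranspose_mul, conjTranspose_mul, conjTranspose_conjTranspose, hσ.eq,
      trace_mul_comm]
  have hρsymm : (trace (ρ * (Z * Xᴴ))).re = (trace (ρ * (X * Zᴴ))).re := by
    rw [← re_trace_star, conjTranspose_mul, conjTranspose_mul, conjTranspose_conjTranspose, hρ.eq,
      trace_mul_comm]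
  have hcross : (trace (ρ * Z)).re =
      (trace (σ * (Zᴴ * X))).re + t * (trace (ρ * (X * Zᴴ))).re := by
    have hZρ : Zᴴ * ρ = Zᴴ * X * σ + (t : ℂ) • (Zᴴ * (ρ * X)) := by
      rw [Matrix.mul_assoc, ← Matrix.mul_smul, ← Matrix.mul_add, hX]
    rw [← re_trace_star, conjTranspose_mul, hρ.eq, hZρ, trace_add, trace_smul, trace_mul_comm,
      trace_mul_comm Zᴴ, Matrix.mul_assoc ρ, Complex.add_re, smul_eq_mul, Complex.re_ofReal_mul]
  simp only [sylvesterForm, conjTranspose_sub, Matrix.sub_mul, Matrix.mul_sub, trace_sub,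
    Complex.sub_re, hcross, hσsymm, hρsymm]
  ring

lemma two_mul_re_trace_sub_sylvesterForm_le {t : ℝ} (ht : 0 ≤ t) {ρ σ X : Matrix n n ℂ}
    (hρ : ρ.PosSemidef) (hσ : σ.PosSemidef) (hX : X * σ + (t : ℂ) • (ρ * X) = ρ)
    (Z : Matrix n n ℂ) :
    2 * (trace (ρ * Z)).re - sylvesterForm t ρ σ Z ≤ sylvesterForm t ρ σ X := by
  linarith [sylvesterForm_sub hρ.isHermitian hσ.isHermitian hX Z,
    sylvesterForm_nonneg ht hρ hσ (X - Z)]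

lemma sylvesterForm_eq_re_trace {t : ℝ} {ρ σ X : Matrix n n ℂ} (hρ : ρ.IsHermitian)
    (hσ : σ.IsHermitian) (hX : X * σ + (t : ℂ) • (ρ * X) = ρ) :
    sylvesterForm t ρ σ X = (trace (ρ * X)).re := by
  have h := sylvesterForm_sub hρ hσ hX X
  rw [sub_self, sylvesterForm_zero] at h
  linarith

variable [DecidableEq n] [Fintype m] [DecidableEq m]

lemma sylvesterForm_map (φ : Matrix m m ℂ →⋆ₐ[ℂ] Matrix n n ℂ) (t : ℝ) (ρ σ : Matrix n n ℂ)
    (X : Matrix m m ℂ) :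
    sylvesterForm t ρ σ (φ X) = sylvesterForm t (traceDual φ ρ) (traceDual φ σ) X := by
  simp only [sylvesterForm, trace_traceDual_mul, map_mul, starAlgHom_conjTranspose]

lemma re_trace_traceDual_mul_le_of_sylvester (φ : Matrix m m ℂ →⋆ₐ[ℂ] Matrix n n ℂ) {t : ℝ}
    (ht : 0 ≤ t) {ρ σ X : Matrix n n ℂ} {Y : Matrix m m ℂ} (hρ : ρ.PosSemidef)
    (hσ : σ.PosSemidef) (hX : X * σ + (t : ℂ) • (ρ * X) = ρ)
    (hY : Y * traceDual φ σ + (t : ℂ) • (traceDual φ ρ * Y) = traceDual φ ρ) :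
    (trace (traceDual φ ρ * Y)).re ≤ (trace (ρ * X)).re := by
  have hmax := two_mul_re_trace_sub_sylvesterForm_le ht hρ hσ hX (φ Y)
  rw [sylvesterForm_map, ← trace_traceDual_mul,
    sylvesterForm_eq_re_trace (posSemidef_traceDual φ hρ).isHermitian
      (posSemidef_traceDual φ hσ).isHermitian hY,
    sylvesterForm_eq_re_trace hρ.isHermitian hσ.isHermitian hX] at hmax
  linarith

lemma jointCfc_sylvester {t : ℝ} (ht : 0 < t) {ρ σ : Matrix n n ℂ} (hρ : ρ.PosSemidef)
    (hσ : σ.PosSemidef) :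
    jointCfc hρ.isHermitian hσ.isHermitian (fun p q => p / (q + t * p)) * σ +
      (t : ℂ) • (ρ * jointCfc hρ.isHermitian hσ.isHermitian fun p q => p / (q + t * p)) = ρ := by
  rw [jointCfc_mul, mul_jointCfc, smul_jointCfc, jointCfc_add]
  refine (jointCfc_congr _ _ fun a b => ?_).trans (jointCfc_fst hρ.isHermitian hσ.isHermitian)
  have hp := hρ.eigenvalues_nonneg a
  have hq := hσ.eigenvalues_nonneg b
  generalize hρ.isHermitian.eigenvalues a = p at hp ⊢
  generalize hσ.isHermitian.eigenvalues b = q at hq ⊢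
  rcases hp.eq_or_lt with rfl | hp
  · simp
  · field_simp

lemma jointTrace_resolvent_traceDual_le (φ : Matrix m m ℂ →⋆ₐ[ℂ] Matrix n n ℂ) {t : ℝ}
    (ht : 0 < t) {ρ σ : Matrix n n ℂ} (hρ : ρ.PosSemidef) (hσ : σ.PosSemidef) :
    jointTrace (posSemidef_traceDual φ hρ).isHermitian (posSemidef_traceDual φ hσ).isHermitian
        (fun p q => p * (p / (q + t * p))) ≤
      jointTrace hρ.isHermitian hσ.isHermitian fun p q => p * (p / (q + t * p)) := by
  simpa only [mul_jointCfc, trace_jointCfc, Complex.ofReal_re] using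
    re_trace_traceDual_mul_le_of_sylvester φ ht.le hρ hσ (jointCfc_sylvester ht hρ hσ)
      (jointCfc_sylvester ht (posSemidef_traceDual φ hρ) (posSemidef_traceDual φ hσ))

end Sylvester

section LogInterpolation

open Filter Topology

variable {m n : Type*} [Fintype m] [DecidableEq m] [Fintype n] [DecidableEq n]
  {ρ σ : Matrix n n ℂ}

lemma le_of_monotoneOn_Ioi_of_tendsto {α : Type*} [TopologicalSpace α] [Preorder α]
    [OrderClosedTopology α] {f : ℝ → α} {x : ℝ} {a b : α} (hf : MonotoneOn f (Set.Ioi x))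
    (ha : Tendsto f (𝓝[>] x) (𝓝 a)) (hb : Tendsto f atTop (𝓝 b)) : a ≤ b := by
  refine ge_of_tendsto hb ?_
  filter_upwards [eventually_gt_atTop x] with t ht
  refine le_of_tendsto ha ?_
  filter_upwards [Ioo_mem_nhdsGT ht] with s hs
  exact hf hs.1 ht hs.2.le

/-- `Tr(ρ log(σ + t ρ))` with `σ` acting from the right and `ρ` from the left. It interpolates
between `Tr(ρ log σ)` at `t = 0` and, up to the divergent term `Tr ρ log t`, the negative
entropy `Tr(ρ log ρ)` at `t = ∞`. -/
noncomputable def logInterpolation (hρ : ρ.IsHermitian) (hσ : σ.IsHermitian) (t : ℝ) : ℝ :=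
  jointTrace hρ hσ fun p q => p * Real.log (q + t * p)

lemma tendsto_logInterpolation_zero (hρ : ρ.PosSemidef) (hσ : σ.IsHermitian)
    (h : SupportLE ρ σ) :
    Tendsto (logInterpolation hρ.isHermitian hσ) (𝓝[>] 0)
      (𝓝 (trace (ρ * cfc Real.log σ)).re) := by
  rw [re_trace_mul_cfc_right hρ.isHermitian hσ]
  refine tendsto_finsetSum _ fun a _ => tendsto_finsetSum _ fun b _ => ?_
  simp only [← mul_assoc]
  by_cases hb : hσ.eigenvalues b = 0
  · simp only [eigenOverlap_mul_eigenvalues_eq_zero hρ hσ h a b hb, zero_mul, tendsto_const_nhds]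
  · refine .const_mul _ (.log (tendsto_nhdsWithin_of_tendsto_nhds ?_) hb)
    exact Continuous.tendsto' (by fun_prop) _ _ (by simp)

lemma tendsto_logInterpolation_sub_atTop (hρ : ρ.PosSemidef) (hσ : σ.PosSemidef) :
    Tendsto
      (fun t => logInterpolation hρ.isHermitian hσ.isHermitian t - (trace ρ).re * Real.log t)
      atTop (𝓝 (trace (ρ * cfc Real.log ρ)).re) := by
  rw [re_trace_mul_cfc_left hρ.isHermitian hσ.isHermitian,
    re_trace_eq_jointTrace hρ.isHermitian hσ.isHermitian]
  simp only [logInterpolation, jointTrace, Finset.sum_mul, ← Finset.sum_sub_distrib]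
  refine tendsto_finsetSum _ fun a _ => tendsto_finsetSum _ fun b _ => ?_
  generalize eigenOverlap _ _ a b = w
  have hp := hρ.eigenvalues_nonneg a
  have hq := hσ.eigenvalues_nonneg b
  generalize hρ.isHermitian.eigenvalues a = p at hp ⊢
  generalize hσ.isHermitian.eigenvalues b = q at hq ⊢
  rcases hp.eq_or_lt with rfl | hp
  · simp
  have hlim : Tendsto (fun t : ℝ => q / t + p) atTop (𝓝 p) := by
    simpa using (tendsto_const_nhds.div_atTop tendsto_id).add_const p
  refine (((hlim.log hp.ne').const_mul p).const_mul w).congr' ?_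
  filter_upwards [eventually_gt_atTop 0] with t ht
  have hdiv : q / t + p = (q + t * p) / t := by field_simp
  rw [hdiv, Real.log_div (by positivity) ht.ne']
  ring

lemma hasDerivAt_logInterpolation (hρ : ρ.PosSemidef) (hσ : σ.PosSemidef) {t : ℝ} (ht : 0 < t) :
    HasDerivAt (logInterpolation hρ.isHermitian hσ.isHermitian)
      (jointTrace hρ.isHermitian hσ.isHermitian fun p q => p * (p / (q + t * p))) t := by
  refine HasDerivAt.fun_sum fun a _ => HasDerivAt.fun_sum fun b _ => .const_mul _ ?_
  have hp := hρ.eigenvalues_nonneg a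
  have hq := hσ.eigenvalues_nonneg b
  generalize hρ.isHermitian.eigenvalues a = p at hp ⊢
  generalize hσ.isHermitian.eigenvalues b = q at hq ⊢
  rcases hp.eq_or_lt with rfl | hp
  · simpa using hasDerivAt_const t (0 : ℝ)
  have hlin : HasDerivAt (fun t => q + t * p) p t := by
    simpa using ((hasDerivAt_id t).mul_const p).const_add q
  exact (hlin.log (by positivity)).const_mul p

lemma monotoneOn_logInterpolation_sub_traceDual (φ : Matrix m m ℂ →⋆ₐ[ℂ] Matrix n n ℂ)
    (hρ : ρ.PosSemidef) (hσ : σ.PosSemidef) :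
    MonotoneOn (fun t => logInterpolation hρ.isHermitian hσ.isHermitian t -
      logInterpolation (posSemidef_traceDual φ hρ).isHermitian
        (posSemidef_traceDual φ hσ).isHermitian t) (Set.Ioi 0) := by
  have hderiv (t : ℝ) (ht : 0 < t) := (hasDerivAt_logInterpolation hρ hσ ht).sub
    (hasDerivAt_logInterpolation (posSemidef_traceDual φ hρ) (posSemidef_traceDual φ hσ) ht)
  refine monotoneOn_of_hasDerivWithinAt_nonneg (convex_Ioi 0)
    (fun t ht => (hderiv t ht).continuousAt.continuousWithinAt)
    (fun t ht => (hderiv t (interior_subset ht)).hasDerivWithinAt)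
    fun t ht => sub_nonneg.2 (jointTrace_resolvent_traceDual_le φ (interior_subset ht) hρ hσ)

end LogInterpolation

section RelativeEntropy

variable {m n : Type*} [Fintype m] [DecidableEq m] [Fintype n] [DecidableEq n]

/-- Umegaki's relative entropy `Tr(ρ log ρ) - Tr(ρ log σ)` in natural units. It is the correct
notion only when `SupportLE ρ σ`: the relative entropy of other pairs is infinite, but
`Real.log 0 = 0` makes this expression finite. -/
noncomputable def relEntropy (ρ σ : Matrix n n ℂ) : ℝ :=
  (trace (ρ * cfc Real.log ρ)).re - (trace (ρ * cfc Real.log σ)).re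

theorem relEntropy_traceDual_le (φ : Matrix m m ℂ →⋆ₐ[ℂ] Matrix n n ℂ) {ρ σ : Matrix n n ℂ}
    (hρ : ρ.PosSemidef) (hσ : σ.PosSemidef) (h : SupportLE ρ σ) :
    relEntropy (traceDual φ ρ) (traceDual φ σ) ≤ relEntropy ρ σ := by
  have hρ' := posSemidef_traceDual φ hρ
  have hσ' := posSemidef_traceDual φ hσ
  have hzero := (tendsto_logInterpolation_zero hρ hσ.isHermitian h).sub
    (tendsto_logInterpolation_zero hρ' hσ'.isHermitian (supportLE_traceDual φ hρ hσ h))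
  have htop := (tendsto_logInterpolation_sub_atTop hρ hσ).sub
    (tendsto_logInterpolation_sub_atTop hρ' hσ')
  simp only [trace_traceDual, sub_sub_sub_cancel_right] at htop
  have hle := le_of_monotoneOn_Ioi_of_tendsto
    (monotoneOn_logInterpolation_sub_traceDual φ hρ hσ) hzero htop
  rw [relEntropy, relEntropy]
  linarith

end RelativeEntropy

section Entropy

lemma vnEntropy_mul_log_two {n : Type} [Fintype n] [DecidableEq n] {ρ : Matrix n n ℂ}
    (hρ : ρ.IsHermitian) : vnEntropy ρ * Real.log 2 = -(trace (ρ * cfc Real.log ρ)).re := by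
  have hlog2 : Real.log 2 ≠ 0 := (Real.log_pos one_lt_two).ne'
  rw [mul_cfc_self hρ, trace_cfc hρ, Complex.re_sum, vnEntropy, dif_pos hρ, Finset.sum_mul,
    ← Finset.sum_neg_distrib]
  refine Finset.sum_congr rfl fun i _ => ?_
  rw [negxlog2, Real.logb, Complex.ofReal_re]
  field_simp

variable {l m m' n : Type} [Fintype l] [DecidableEq l] [Fintype m] [DecidableEq m]
  [Fintype m'] [DecidableEq m'] [Fintype n] [DecidableEq n]

lemma relEntropy_map_traceDual (φ : Matrix m m ℂ →⋆ₐ[ℂ] Matrix n n ℂ) {ρ : Matrix n n ℂ}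
    (hρ : ρ.PosSemidef) :
    relEntropy ρ (φ (traceDual φ ρ)) =
      (vnEntropy (traceDual φ ρ) - vnEntropy ρ) * Real.log 2 := by
  have hρ' := (posSemidef_traceDual φ hρ).isHermitian
  rw [relEntropy, ← map_cfc_starAlgHom φ hρ', ← trace_traceDual_mul, sub_mul,
    vnEntropy_mul_log_two hρ', vnEntropy_mul_log_two hρ.isHermitian]
  ring

theorem vnEntropy_add_le_of_commutingSquare {φ : Matrix m m ℂ →⋆ₐ[ℂ] Matrix n n ℂ}
    {ψ : Matrix m' m' ℂ →⋆ₐ[ℂ] Matrix n n ℂ} {χ : Matrix l l ℂ →⋆ₐ[ℂ] Matrix m m ℂ}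
    {ω : Matrix l l ℂ →⋆ₐ[ℂ] Matrix m' m' ℂ} (hcomp : φ.comp χ = ψ.comp ω)
    (hsquare : ∀ τ, traceDual ψ (φ τ) = ω (traceDual χ τ)) {ρ : Matrix n n ℂ}
    (hρ : ρ.PosSemidef) :
    vnEntropy ρ + vnEntropy (traceDual (ψ.comp ω) ρ) ≤
      vnEntropy (traceDual φ ρ) + vnEntropy (traceDual ψ ρ) := by
  have hreduced : traceDual ψ (φ (traceDual φ ρ)) = ω (traceDual ω (traceDual ψ ρ)) := by
    rw [hsquare, traceDual_traceDual, hcomp, traceDual_traceDual]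
  have hle := relEntropy_traceDual_le ψ hρ
    (posSemidef_map_starAlgHom φ (posSemidef_traceDual φ hρ)) (supportLE_map_traceDual φ hρ)
  rw [hreduced, relEntropy_map_traceDual ω (posSemidef_traceDual ψ hρ),
    relEntropy_map_traceDual φ hρ, traceDual_traceDual] at hle
  linarith [le_of_mul_le_mul_right hle (Real.log_pos one_lt_two)]

end Entropy

section Factorization

open scoped Kronecker

variable {n m k : Type*} [Fintype n] [DecidableEq n] [Fintype m] [DecidableEq m] [Fintype k]
  [DecidableEq k]

/-- The embedding `X ↦ X ⊗ 1` of the observables of the first factor of a bipartite system, whose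
factorization is given by the bijection `e` of basis indices. -/
def factorInclusion (e : n ≃ m × k) : Matrix m m ℂ →⋆ₐ[ℂ] Matrix n n ℂ where
  toFun X := (X ⊗ₖ (1 : Matrix k k ℂ)).submatrix e e
  map_one' := by rw [one_kronecker_one, submatrix_one_equiv]
  map_mul' X Y := by rw [submatrix_mul_equiv, ← mul_kronecker_mul, Matrix.one_mul]
  map_zero' := by rw [zero_kronecker, submatrix_zero]; rfl
  map_add' X Y := by rw [add_kronecker, submatrix_add]; rfl
  commutes' c := by
    rw [Algebra.algebraMap_eq_smul_one, Algebra.algebraMap_eq_smul_one, smul_kronecker,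
      one_kronecker_one, submatrix_smul, Pi.smul_apply, Pi.smul_apply,
      submatrix_one_equiv]
  map_star' X := by
    rw [star_eq_conjTranspose, star_eq_conjTranspose, conjTranspose_submatrix,
      conjTranspose_kronecker, conjTranspose_one]

lemma factorInclusion_apply (e : n ≃ m × k) (X : Matrix m m ℂ) (x y : n) :
    factorInclusion e X x y = if (e x).2 = (e y).2 then X (e x).1 (e y).1 else 0 := by
  simp [factorInclusion, kroneckerMap_apply, one_apply]

lemma traceDual_factorInclusion_apply (e : n ≃ m × k) (ρ : Matrix n n ℂ) (x y : m) :
    traceDual (factorInclusion e) ρ x y = ∑ c, ρ (e.symm (x, c)) (e.symm (y, c)) := by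
  calc traceDual (factorInclusion e) ρ x y
      = ∑ u, ∑ v, ρ u v * factorInclusion e (single y x 1) v u := rfl
    _ = ∑ i, ∑ j, ρ (e.symm i) (e.symm j) *
          factorInclusion e (single y x 1) (e.symm j) (e.symm i) := by
      simp only [← e.symm.sum_comp]
    _ = ∑ c, ρ (e.symm (x, c)) (e.symm (y, c)) := by
      simp [factorInclusion_apply, Fintype.sum_prod_type_right, single_apply, ite_and]

lemma factorInclusion_comp {l q r : Type*} [Fintype l] [DecidableEq l] [Fintype q]
    [DecidableEq q] [Fintype r] [DecidableEq r]
    {e : n ≃ m × k} {g : m ≃ l × q} {f : n ≃ l × r}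
    (hl : ∀ w, (f w).1 = (g (e w).1).1)
    (hk : ∀ w w', (f w).2 = (f w').2 ↔ (e w).2 = (e w').2 ∧ (g (e w).1).2 = (g (e w').1).2) :
    (factorInclusion e).comp (factorInclusion g) = factorInclusion f := by
  ext X x y
  simp only [StarAlgHom.comp_apply, factorInclusion_apply, hl, hk, ite_and]

end Factorization

section CommutingSquare

variable {n m m' l k k' : Type*} [Fintype n] [DecidableEq n] [Fintype m] [DecidableEq m]
  [Fintype m'] [DecidableEq m'] [Fintype l] [DecidableEq l] [Fintype k] [DecidableEq k]
  [Fintype k'] [DecidableEq k'] {e : n ≃ m × k} {f : n ≃ m' × k'} {g : m ≃ l × k'}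
  {h : m' ≃ l × k}

lemma factorInclusion_comp_eq_comp (hl : ∀ w, (g (e w).1).1 = (h (f w).1).1)
    (hk : ∀ w, (e w).2 = (h (f w).1).2) (hk' : ∀ w, (f w).2 = (g (e w).1).2) :
    (factorInclusion e).comp (factorInclusion g) =
      (factorInclusion f).comp (factorInclusion h) := by
  ext X x y
  simp only [StarAlgHom.comp_apply, factorInclusion_apply, hl, hk, hk']
  split_ifs <;> rfl

lemma traceDual_factorInclusion_factorInclusion (hl : ∀ w, (g (e w).1).1 = (h (f w).1).1)
    (hk : ∀ w, (e w).2 = (h (f w).1).2) (hk' : ∀ w, (f w).2 = (g (e w).1).2)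
    (τ : Matrix m m ℂ) :
    traceDual (factorInclusion f) (factorInclusion e τ) =
      factorInclusion h (traceDual (factorInclusion g) τ) := by
  have hm (x : m') (c : k') : (e (f.symm (x, c))).1 = g.symm ((h x).1, c) := by
    rw [Equiv.eq_symm_apply]
    refine Prod.ext ?_ ?_
    · rw [hl, Equiv.apply_symm_apply]
    · rw [← hk', Equiv.apply_symm_apply]
  ext x y
  simp only [traceDual_factorInclusion_apply, factorInclusion_apply, hk, Equiv.apply_symm_apply,
    hm, Finset.sum_ite_irrel, Finset.sum_const_zero]

end CommutingSquare

section ReducedStates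

variable {ι : Type} [DecidableEq ι] {d : ι → Type}

/-- The configurations (basis indices) of the parties in `u` as pairs of configurations of the
parties in the two complementary parts `s` and `r` of `u`. -/
def configSplit {s r u : Finset ι} (hd : Disjoint s r) (hu : s ∪ r = u) :
    (∀ i : u, d i) ≃ (∀ i : s, d i) × (∀ i : r, d i) where
  toFun w := (Finset.restrict₂ (hu ▸ Finset.subset_union_left) w,
    Finset.restrict₂ (hu ▸ Finset.subset_union_right) w)
  invFun p i := if hi : i.1 ∈ s then p.1 ⟨i, hi⟩ else
    p.2 ⟨i, (Finset.mem_union.1 (hu ▸ i.2)).resolve_left hi⟩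
  left_inv w := by
    ext i
    by_cases hi : i.1 ∈ s <;> simp [hi]
  right_inv p := by
    ext i
    · simp
    · simp [Finset.disjoint_right.1 hd i.2]

variable [Fintype ι] [∀ i, Fintype (d i)] {ρ : Matrix (∀ i, d i) (∀ i, d i) ℂ}

lemma pTr_eq_traceDual [∀ i, DecidableEq (d i)] (ρ : Matrix (∀ i, d i) (∀ i, d i) ℂ)
    (s : Finset ι) :
    pTr ρ s = traceDual (factorInclusion (Equiv.piEquivPiSubtypeProd (· ∈ s) d)) ρ := by
  ext x y
  rw [traceDual_factorInclusion_apply]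
  rfl

lemma posSemidef_pTr (hρ : ρ.PosSemidef) (s : Finset ι) : (pTr ρ s).PosSemidef := by
  classical exact pTr_eq_traceDual ρ s ▸ posSemidef_traceDual _ hρ

variable [∀ i, DecidableEq (d i)]

lemma traceDual_configSplit_pTr (ρ : Matrix (∀ i, d i) (∀ i, d i) ℂ) {s r u : Finset ι}
    (hd : Disjoint s r) (hu : s ∪ r = u) :
    traceDual (factorInclusion (configSplit hd hu)) (pTr ρ u) = pTr ρ s := by
  rw [pTr_eq_traceDual, pTr_eq_traceDual, traceDual_traceDual]
  congr 1
  refine factorInclusion_comp (fun _ => rfl) fun w w' => ?_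
  have hmem (i : ι) : i ∉ s ↔ i ∉ u ∨ i ∈ r := by grind [Finset.disjoint_left]
  simp [configSplit, funext_iff, hmem, or_imp, forall_and]

theorem Sv_union_add_Sv_inter_le (hρ : ρ.PosSemidef) (s t : Finset ι) :
    Sv ρ (s ∪ t) + Sv ρ (s ∩ t) ≤ Sv ρ s + Sv ρ t := by
  have hst : s ∪ t \ s = s ∪ t := Finset.union_sdiff_self_eq_union
  have hts : t ∪ s \ t = s ∪ t := by rw [Finset.union_sdiff_self_eq_union, Finset.union_comm]
  have hs : s ∩ t ∪ s \ t = s := by grind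
  have ht : s ∩ t ∪ t \ s = t := by grind
  have hds : Disjoint (s ∩ t) (s \ t) := (Finset.disjoint_sdiff_inter s t).symm
  have hdt : Disjoint (s ∩ t) (t \ s) :=
    Finset.inter_comm t s ▸ (Finset.disjoint_sdiff_inter t s).symm
  have hssa := vnEntropy_add_le_of_commutingSquare
    (factorInclusion_comp_eq_comp (e := configSplit disjoint_sdiff_self_right hst)
      (f := configSplit disjoint_sdiff_self_right hts) (g := configSplit hds hs)
      (h := configSplit hdt ht) (fun _ => rfl) (fun _ => rfl) (fun _ => rfl))
    (traceDual_factorInclusion_factorInclusion (fun _ => rfl) (fun _ => rfl) (fun _ => rfl))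
    (posSemidef_pTr hρ (s ∪ t))
  rwa [← traceDual_traceDual, traceDual_configSplit_pTr, traceDual_configSplit_pTr,
    traceDual_configSplit_pTr] at hssa

end ReducedStates

section DualMutualInformation

variable {ι : Type} [Fintype ι] [DecidableEq ι] {d : ι → Type} [∀ i, Fintype (d i)]
  [∀ i, DecidableEq (d i)]

lemma MI'_insert (ρ : Matrix (∀ i, d i) (∀ i, d i) ℂ) {X : Finset ι} {P : Finset (Finset ι)}
    (hXP : X ∉ P) (hdisj : ∀ Y ∈ P, Disjoint X Y) :
    MI' ρ (insert X P) = Sv ρ (P.sup id) +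
      ∑ Y ∈ P, (Sv ρ (X ∪ P.sup id \ Y) - Sv ρ (X ∪ P.sup id)) := by
  have hX : (X ∪ P.sup id) \ X = P.sup id := by
    rw [Finset.union_sdiff_left, Finset.sdiff_eq_self_iff_disjoint, disjoint_comm]
    exact Finset.disjoint_sup_right.2 hdisj
  have hY (Y) (hYP : Y ∈ P) : (X ∪ P.sup id) \ Y = X ∪ P.sup id \ Y := by
    rw [Finset.union_sdiff_distrib, Finset.sdiff_eq_self_of_disjoint (hdisj Y hYP)]
  have hsum : ∑ Y ∈ P, Sv ρ ((X ∪ P.sup id) \ Y) = ∑ Y ∈ P, Sv ρ (X ∪ P.sup id \ Y) :=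
    Finset.sum_congr rfl fun Y hYP => by rw [hY Y hYP]
  rw [MI', Finset.sup_insert, id, Finset.sup_eq_union, Finset.sum_insert hXP,
    Finset.card_insert_of_notMem hXP, hX, hsum, Finset.sum_sub_distrib, Finset.sum_const]
  push_cast
  ring

lemma Sv_union_sdiff_sub_mono {ρ : Matrix (∀ i, d i) (∀ i, d i) ℂ} (hρ : ρ.PosSemidef)
    {X X' R : Finset ι} (hX : X' ⊆ X) (hXR : Disjoint X R) (Y : Finset ι) :
    Sv ρ (X' ∪ R \ Y) - Sv ρ (X' ∪ R) ≤ Sv ρ (X ∪ R \ Y) - Sv ρ (X ∪ R) := by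
  have hunion : (X ∪ R \ Y) ∪ (X' ∪ R) = X ∪ R := by grind
  have hinter : (X ∪ R \ Y) ∩ (X' ∪ R) = X' ∪ R \ Y := by grind [Finset.disjoint_left]
  have hssa := Sv_union_add_Sv_inter_le hρ (X ∪ R \ Y) (X' ∪ R)
  rw [hunion, hinter] at hssa
  linarith

theorem MI'_insert_mono {ρ : Matrix (∀ i, d i) (∀ i, d i) ℂ} (hρ : ρ.PosSemidef)
    {X X' : Finset ι} {P : Finset (Finset ι)} (hX : X' ⊆ X) (hX' : X'.Nonempty)
    (hdisj : ∀ Y ∈ P, Disjoint X Y) : MI' ρ (insert X' P) ≤ MI' ρ (insert X P) := by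
  have hnotMem {W : Finset ι} (hWX : W ⊆ X) (hW : W.Nonempty) : W ∉ P := fun hWP =>
    hW.ne_empty (Finset.disjoint_self_iff_empty W |>.1 ((hdisj W hWP).mono_left hWX))
  rw [MI'_insert ρ (hnotMem subset_rfl (hX'.mono hX)) hdisj,
    MI'_insert ρ (hnotMem hX hX') fun Y hY => (hdisj Y hY).mono_left hX]
  gcongr Sv ρ (P.sup id) + ∑ Y ∈ P, ?_
  exact Sv_union_sdiff_sub_mono hρ hX (Finset.disjoint_sup_right.2 hdisj) _

lemma MI'_triple (ρ : Matrix (∀ i, d i) (∀ i, d i) ℂ) {X Y Z : Finset ι} (hXY : Disjoint X Y)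
    (hXZ : Disjoint X Z) (hYZ : Disjoint Y Z) (hY : Y.Nonempty) (hZ : Z.Nonempty) :
    MI' ρ {X, Y, Z} =
      Sv ρ (X ∪ Y) + Sv ρ (X ∪ Z) + Sv ρ (Y ∪ Z) - 2 * Sv ρ (X ∪ (Y ∪ Z)) := by
  have hne : Y ≠ Z := hYZ.ne hY.ne_empty
  have hXP : X ∉ ({Y, Z} : Finset (Finset ι)) := by
    grind [Finset.disjoint_left, Finset.Nonempty]
  rw [MI'_insert ρ hXP (by simp [hXY, hXZ]), Finset.sup_insert, Finset.sup_singleton,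
    Finset.sum_pair hne]
  simp only [id, Finset.sup_eq_union, Finset.union_sdiff_cancel_left hYZ,
    Finset.union_sdiff_cancel_right hYZ]
  ring

theorem dualMutualInfo_six_party_general {ρ : Matrix (∀ i, d i) (∀ i, d i) ℂ}
    (hρ : ρ.PosSemidef) {X Y Y' Z Z' : Finset ι} (hXY : Disjoint X Y) (hXZ : Disjoint X Z)
    (hYZ : Disjoint Y Z) (hY : Y' ⊆ Y) (hZ : Z' ⊆ Z) (hY' : Y'.Nonempty) (hZ' : Z'.Nonempty) :
    MI' ρ {X, Y, Z} ≥ MI' ρ {X, Y', Z'} ∧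
      Sv ρ (X ∪ Y) + Sv ρ (X ∪ Z) + Sv ρ (Y ∪ Z) - 2 * Sv ρ (X ∪ (Y ∪ Z)) ≥
        Sv ρ (X ∪ Y') + Sv ρ (X ∪ Z') + Sv ρ (Y' ∪ Z') - 2 * Sv ρ (X ∪ (Y' ∪ Z')) := by
  have hshrink : MI' ρ {X, Y, Z} ≥ MI' ρ {X, Y', Z'} := calc
    MI' ρ {X, Y', Z'} = MI' ρ {Y', X, Z'} := by rw [Finset.insert_comm]
    _ ≤ MI' ρ {Y, X, Z'} :=
      MI'_insert_mono hρ hY hY' (by simp [hXY.symm, hYZ.mono_right hZ])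
    _ = MI' ρ {Z', X, Y} := by congr 1; grind
    _ ≤ MI' ρ {Z, X, Y} := MI'_insert_mono hρ hZ hZ' (by simp [hXZ.symm, hYZ.symm])
    _ = MI' ρ {X, Y, Z} := by congr 1; grind
  refine ⟨hshrink, ?_⟩
  rwa [MI'_triple ρ hXY hXZ hYZ (hY'.mono hY) (hZ'.mono hZ),
    MI'_triple ρ (hXY.mono_right hY) (hXZ.mono_right hZ) (hYZ.mono hY hZ) hY' hZ'] at hshrink

end DualMutualInformation

/-- For every density operator `ρ` on a six-partite Hilbert space
`H^A⊗H^B⊗H^C⊗H^D⊗H^E⊗H^F` (parties `0,…,5`), one has `I'(AB:CD:EF) ≥ I'(AB:C:E)`, i.e.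
`S(ABCD)+S(ABEF)+S(CDEF)-2S(ABCDEF) ≥ S(ABC)+S(ABE)+S(CE)-2S(ABCE)`. -/
theorem dualMutualInfo_six_party
    {d : Fin 6 → Type} [∀ i, Fintype (d i)] [∀ i, DecidableEq (d i)]
    (ρ : Matrix (∀ i, d i) (∀ i, d i) ℂ) (hρ : IsDensity ρ) :
    MI' ρ {({0, 1} : Finset (Fin 6)), {2, 3}, {4, 5}}
      ≥ MI' ρ {({0, 1} : Finset (Fin 6)), {2}, {4}}
    ∧ Sv ρ {0, 1, 2, 3} + Sv ρ {0, 1, 4, 5} + Sv ρ {2, 3, 4, 5}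
        - 2 * Sv ρ {0, 1, 2, 3, 4, 5}
      ≥ Sv ρ {0, 1, 2} + Sv ρ {0, 1, 4} + Sv ρ {2, 4} - 2 * Sv ρ {0, 1, 2, 4} := by
  simpa only [Finset.insert_union, Finset.singleton_union] using
    dualMutualInfo_six_party_general hρ.1 (X := {0, 1}) (Y := {2, 3}) (Y' := {2}) (Z := {4, 5})
      (Z' := {4}) (by decide) (by decide) (by decide) (by decide) (by decide) (by decide)
      (by decide)
end

section
/- If a density operator on a finite-dimensional n-partite Hilbert space is a product across the cut A_1⋯A_k | A_{k+1}⋯A_n, i.e., ρ^{A_1⋯A_n} = ρ^{A_1⋯A_k} ⊗ ρ^{A_{k+1}⋯A_n}, then I'(A_1:A_2:⋯:A_n) = I'(A_1:⋯:A_k) + I'(A_{k+1}:⋯:A_n); in particular, for a four-partite state with ρ^{ABCD} = ρ^{AB} ⊗ ρ^{CD}, I'(A:B:C:D) = I'(A:B) + I'(C:D). -/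
open scoped BigOperators ComplexOrder
open Matrix

/-!
The dual mutual information is `I'(P) = S(P) - ∑_X S(X | rest of P)`. Tracing out parties on one
side of a product cut leaves a product, and the entropy of a product of density operators is the
sum of their entropies. Hence across a product cut the joint entropy splits, and in the conditional
entropy `S(X | rest)` of a block on one side the entropy of the other side cancels.
-/

open scoped Kronecker

section Spectrum

open Polynomial

variable {𝕜 m n : Type*} [RCLike 𝕜] {A : Matrix m m 𝕜} {B : Matrix n n 𝕜}

theorem isHermitian_kronecker (hA : A.IsHermitian) (hB : B.IsHermitian) :
    (A ⊗ₖ B).IsHermitian := by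
  rw [IsHermitian, conjTranspose_kronecker, hA.eq, hB.eq]

variable [Fintype m] [DecidableEq m] [Fintype n] [DecidableEq n]

theorem charpoly_kronecker_of_isHermitian (hA : A.IsHermitian) (hB : B.IsHermitian) :
    (A ⊗ₖ B).charpoly =
      ∏ p : m × n, (X - C ((hA.eigenvalues p.1 * hB.eigenvalues p.2 : ℝ) : 𝕜)) := by
  set U : Matrix m m 𝕜 := ↑hA.eigenvectorUnitary
  set V : Matrix n n 𝕜 := ↑hB.eigenvectorUnitary
  set D : Matrix (m × n) (m × n) 𝕜 :=
    diagonal fun p => ((hA.eigenvalues p.1 * hB.eigenvalues p.2 : ℝ) : 𝕜)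
  have hunitary : (star U ⊗ₖ star V) * (U ⊗ₖ V) = 1 := by
    rw [← mul_kronecker_mul]
    simp [U, V]
  have hdiag : A ⊗ₖ B = (U ⊗ₖ V) * D * (star U ⊗ₖ star V) := by
    conv_lhs => rw [hA.spectral_theorem, hB.spectral_theorem]
    simp only [Unitary.conjStarAlgAut_apply, mul_kronecker_mul, diagonal_kronecker_diagonal]
    simp [U, V, D]
  rw [hdiag, charpoly_mul_comm, ← mul_assoc, hunitary, one_mul, charpoly_diagonal]

end Spectrum

section Entropy

open Finset Polynomial

variable {m n : Type} [Fintype m] [DecidableEq m] [Fintype n] [DecidableEq n]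
  {A : Matrix m m ℂ} {B : Matrix n n ℂ}

theorem vnEntropy_eq_sum_of_charpoly_eq {κ : Type*} [Fintype κ] (hA : A.IsHermitian) {l : κ → ℝ}
    (hl : A.charpoly = ∏ k, (X - C (l k : ℂ))) :
    vnEntropy A = ∑ k, negxlog2 (l k) := by
  have hroots : univ.val.map (fun i => (hA.eigenvalues i : ℂ)) =
      univ.val.map (fun k => (l k : ℂ)) := by
    rw [← roots_multiset_prod_X_sub_C (univ.val.map fun k => (l k : ℂ)),
      Multiset.map_map]
    exact hA.roots_charpoly_eq_eigenvalues.symm.trans (congrArg roots hl)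
  have hsum := congrArg (fun M => (M.map fun z : ℂ => negxlog2 z.re).sum) hroots
  simp only [Multiset.map_map, Function.comp_def, Complex.ofReal_re] at hsum
  rw [vnEntropy, dif_pos hA]
  exact hsum

theorem vnEntropy_reindex (hA : A.IsHermitian) (e : m ≃ n) :
    vnEntropy (reindex e e A) = vnEntropy A := by
  have hreindex : (reindex e e A).IsHermitian := hA.submatrix e.symm
  have hcharpoly : (reindex e e A).charpoly = ∏ i, (X - C (hA.eigenvalues i : ℂ)) :=
    (charpoly_reindex e A).trans hA.charpoly_eq
  rw [vnEntropy_eq_sum_of_charpoly_eq hreindex hcharpoly, vnEntropy, dif_pos hA]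

theorem negxlog2_mul (x y : ℝ) : negxlog2 (x * y) = negxlog2 x * y + x * negxlog2 y := by
  unfold negxlog2
  rcases eq_or_ne x 0 with rfl | hx
  · simp
  rcases eq_or_ne y 0 with rfl | hy
  · simp
  rw [Real.logb_mul hx hy]
  ring

theorem vnEntropy_kronecker (hA : A.IsHermitian) (hB : B.IsHermitian) :
    vnEntropy (A ⊗ₖ B) = vnEntropy A * B.trace.re + A.trace.re * vnEntropy B := by
  rw [vnEntropy_eq_sum_of_charpoly_eq (isHermitian_kronecker hA hB)
    (charpoly_kronecker_of_isHermitian hA hB), hA.trace_eq_sum_eigenvalues,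
    hB.trace_eq_sum_eigenvalues, vnEntropy, dif_pos hA, vnEntropy, dif_pos hB]
  simp [Fintype.sum_prod_type, negxlog2_mul, sum_add_distrib, sum_mul_sum]

end Entropy

section Configurations

open Finset Function

variable {ι : Type*} [DecidableEq ι] {d : ι → Type*} {r t u : Finset ι}

theorem restrict_updateFinset_of_disjoint (h : Disjoint r u) (x : ∀ i, d i)
    (z : (i : r) → d i) : u.restrict (updateFinset x r z) = u.restrict x :=
  funext fun i => dif_neg (disjoint_right.mp h i.2)

theorem piFinsetUnion_symm_apply (h : Disjoint t u) (x : (i : ↥(t ∪ u)) → d i) :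
    (Equiv.piFinsetUnion d h).symm x =
      (restrict₂ subset_union_left x, restrict₂ subset_union_right x) := by
  rw [Equiv.symm_apply_eq]
  ext ⟨i, hi⟩
  rcases mem_union.mp hi with hit | hiu
  · rw [Equiv.piFinsetUnion_left d h hit]
    rfl
  · rw [Equiv.piFinsetUnion_right d h hiu]
    rfl

end Configurations

section ReducedState

open Finset Function

variable {ι : Type} [Fintype ι] [DecidableEq ι] {d : ι → Type} [∀ i, Fintype (d i)]
  {ρ : Matrix (∀ i, d i) (∀ i, d i) ℂ} {r t : Finset ι}

theorem isHermitian_pTr (hρ : ρ.IsHermitian) (t : Finset ι) : (pTr ρ t).IsHermitian := by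
  ext x y
  simp only [conjTranspose_apply, pTr, star_sum, hρ.apply]

theorem trace_pTr (ρ : Matrix (∀ i, d i) (∀ i, d i) ℂ) (t : Finset ι) :
    (pTr ρ t).trace = ρ.trace := by
  simp only [trace, Matrix.diag_apply, pTr]
  rw [← Fintype.sum_prod_type']
  exact Fintype.sum_equiv (Equiv.piEquivPiSubtypeProd (· ∈ t) d).symm _ _ fun _ => rfl

theorem pTr_restrict (ρ : Matrix (∀ i, d i) (∀ i, d i) ℂ) (t : Finset ι) (x y : ∀ i, d i) :
    pTr ρ t (t.restrict x) (t.restrict y) =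
      ∑ z : (i : ↥tᶜ) → d i, ρ (updateFinset x tᶜ z) (updateFinset y tᶜ z) := by
  let e : ((i : {i // i ∉ t}) → d i) ≃ ((i : ↥tᶜ) → d i) :=
    Equiv.piCongrLeft' _ (Equiv.subtypeEquivRight fun _ => mem_compl.symm)
  have hcombine (x : ∀ i, d i) (z : (i : {i // i ∉ t}) → d i) :
      combine t (t.restrict x) z = updateFinset x tᶜ (e z) := by
    ext i
    by_cases hi : i ∈ t
    · simp [combine, updateFinset, hi]
    · simp only [combine, updateFinset, hi, mem_compl, not_false_eq_true, dite_true, dite_false]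
      rfl
  simp only [pTr, hcombine]
  exact e.sum_comp fun z => ρ (updateFinset x tᶜ z) (updateFinset y tᶜ z)

theorem pTr_univ_restrict (ρ : Matrix (∀ i, d i) (∀ i, d i) ℂ) (x y : ∀ i, d i) :
    pTr ρ univ (univ.restrict x) (univ.restrict y) = ρ x y := by
  rw [pTr_restrict, compl_univ]
  simp

theorem pTr_sdiff_restrict (hr : r ⊆ t) (x y : ∀ i, d i) :
    pTr ρ (t \ r) ((t \ r).restrict x) ((t \ r).restrict y) =
      ∑ z : (i : r) → d i,
        pTr ρ t (t.restrict (updateFinset x r z)) (t.restrict (updateFinset y r z)) := by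
  have hdisj : Disjoint r tᶜ := disjoint_compl_right.mono_left hr
  have hcompl : (t \ r)ᶜ = r ∪ tᶜ := by
    rw [sdiff_eq_inter_compl, compl_inter, compl_compl, union_comm]
  simp only [pTr_restrict, updateFinset_updateFinset hdisj]
  rw [hcompl, ← Fintype.sum_prod_type']
  exact (Equiv.sum_comp (Equiv.piFinsetUnion d hdisj)
    fun z => ρ (updateFinset x (r ∪ tᶜ) z) (updateFinset y (r ∪ tᶜ) z)).symm

end ReducedState

/-- The reduced state on `t ∪ u` is `ρ^t ⊗ ρ^u`, that is, `ρ` is a product across the cut `t | u`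
once the remaining parties are traced out; meaningful for disjoint `t` and `u`. Entries are indexed
by configurations of all the parties, so that no casts between configurations of propositionally
equal sets of parties arise. -/
def IsProductAcross {ι : Type} [Fintype ι] [DecidableEq ι] {d : ι → Type} [∀ i, Fintype (d i)]
    (ρ : Matrix (∀ i, d i) (∀ i, d i) ℂ) (t u : Finset ι) : Prop :=
  ∀ x y : ∀ i, d i, pTr ρ (t ∪ u) ((t ∪ u).restrict x) ((t ∪ u).restrict y) =
    pTr ρ t (t.restrict x) (t.restrict y) * pTr ρ u (u.restrict x) (u.restrict y)

namespace IsProductAcross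

open Finset Function

variable {ι : Type} [Fintype ι] [DecidableEq ι] {d : ι → Type} [∀ i, Fintype (d i)]
  {ρ : Matrix (∀ i, d i) (∀ i, d i) ℂ} {r t u : Finset ι}

theorem compl_iff {s : Finset ι} :
    IsProductAcross ρ s sᶜ ↔ ∀ x y : ∀ i, d i, ρ x y =
      pTr ρ s (s.restrict x) (s.restrict y) * pTr ρ sᶜ (sᶜ.restrict x) (sᶜ.restrict y) := by
  refine forall₂_congr fun x y => ?_
  rw [union_compl, pTr_univ_restrict]

theorem symm (h : IsProductAcross ρ t u) : IsProductAcross ρ u t := fun x y => by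
  rw [union_comm, h x y, mul_comm]

theorem sdiff_left (h : IsProductAcross ρ t u) (htu : Disjoint t u) (hr : r ⊆ t) :
    IsProductAcross ρ (t \ r) u := fun x y => by
  have hru : Disjoint r u := htu.mono_left hr
  have hunion : t \ r ∪ u = (t ∪ u) \ r := by
    rw [union_sdiff_distrib, sdiff_eq_self_of_disjoint hru.symm]
  rw [hunion, pTr_sdiff_restrict (hr.trans subset_union_left), pTr_sdiff_restrict hr, sum_mul]
  simp only [h _ _, restrict_updateFinset_of_disjoint hru]

theorem pTr_union [Nonempty (∀ i, d i)] (h : IsProductAcross ρ t u) (htu : Disjoint t u) :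
    pTr ρ (t ∪ u) =
      reindex (Equiv.piFinsetUnion d htu) (Equiv.piFinsetUnion d htu) (pTr ρ t ⊗ₖ pTr ρ u) := by
  obtain ⟨w⟩ := ‹Nonempty (∀ i, d i)›
  ext x y
  have hentry := h (updateFinset w (t ∪ u) x) (updateFinset w (t ∪ u) y)
  rw [restrict_updateFinset, restrict_updateFinset] at hentry
  simpa only [restrict_updateFinset_of_subset subset_union_left,
    restrict_updateFinset_of_subset subset_union_right, reindex_apply, submatrix_apply,
    kroneckerMap_apply, piFinsetUnion_symm_apply] using hentry

variable [∀ i, DecidableEq (d i)]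

theorem Sv_union (h : IsProductAcross ρ t u) (htu : Disjoint t u) (hρ : ρ.IsHermitian)
    (htrace : ρ.trace = 1) : Sv ρ (t ∪ u) = Sv ρ t + Sv ρ u := by
  have hnonempty : Nonempty (∀ i, d i) := by
    by_contra hempty
    rw [not_nonempty_iff] at hempty
    simp [trace] at htrace
  have ht := isHermitian_pTr hρ t
  have hu := isHermitian_pTr hρ u
  rw [Sv, h.pTr_union htu, vnEntropy_reindex (isHermitian_kronecker ht hu),
    vnEntropy_kronecker ht hu, trace_pTr, trace_pTr, htrace]
  simp [Sv]

end IsProductAcross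

section Blocks

open Finset

variable {ι : Type} [DecidableEq ι]

theorem sum_union_of_disjoint_sup {M : Type*} [AddCommMonoid M] {P Q : Finset (Finset ι)}
    (hPQ : Disjoint (P.sup id) (Q.sup id)) {f : Finset ι → M} (hf : f ∅ = 0) :
    ∑ X ∈ P ∪ Q, f X = ∑ X ∈ P, f X + ∑ X ∈ Q, f X := by
  have hinter : ∑ X ∈ P ∩ Q, f X = 0 := sum_eq_zero fun X hX => by
    have hXP : X ⊆ P.sup id := le_sup (f := id) (mem_inter.mp hX).1
    have hXQ : X ⊆ Q.sup id := le_sup (f := id) (mem_inter.mp hX).2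
    rw [disjoint_self_iff_empty X |>.mp (hPQ.mono hXP hXQ), hf]
  rw [← sum_union_inter, hinter, add_zero]

theorem sup_finest (s : Finset ι) : (finest s).sup id = s := by
  ext
  simp [finest]

theorem finest_union (s t : Finset ι) : finest (s ∪ t) = finest s ∪ finest t :=
  image_union s t

end Blocks

section DualMutualInformation

open Finset

variable {ι : Type} [Fintype ι] [DecidableEq ι] {d : ι → Type}
  [∀ i, Fintype (d i)] [∀ i, DecidableEq (d i)]
  {ρ : Matrix (∀ i, d i) (∀ i, d i) ℂ}

/-- The conditional entropy `S(X | t \ X) = S(t) - S(t \ X)` of the parties in `X` given the other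
parties in `t`, intended for `X ⊆ t`. -/
noncomputable def condEntropyIn (ρ : Matrix (∀ i, d i) (∀ i, d i) ℂ) (X t : Finset ι) : ℝ :=
  Sv ρ t - Sv ρ (t \ X)

theorem condEntropyIn_empty (ρ : Matrix (∀ i, d i) (∀ i, d i) ℂ) (t : Finset ι) :
    condEntropyIn ρ ∅ t = 0 := by
  simp [condEntropyIn]

theorem MI'_eq_sub_sum_condEntropyIn (ρ : Matrix (∀ i, d i) (∀ i, d i) ℂ)
    (P : Finset (Finset ι)) :
    MI' ρ P = Sv ρ (P.sup id) - ∑ X ∈ P, condEntropyIn ρ X (P.sup id) := by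
  simp only [MI', condEntropyIn, sum_sub_distrib, sum_const, nsmul_eq_mul]
  ring

theorem IsProductAcross.condEntropyIn_union_left {t u X : Finset ι} (h : IsProductAcross ρ t u)
    (htu : Disjoint t u) (hρ : ρ.IsHermitian) (htrace : ρ.trace = 1) (hX : X ⊆ t) :
    condEntropyIn ρ X (t ∪ u) = condEntropyIn ρ X t := by
  have hsdiff : (t ∪ u) \ X = t \ X ∪ u := by
    rw [union_sdiff_distrib, sdiff_eq_self_of_disjoint (htu.mono_left hX).symm]
  rw [condEntropyIn, hsdiff, h.Sv_union htu hρ htrace,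
    (h.sdiff_left htu hX).Sv_union (htu.mono_left sdiff_subset) hρ htrace, condEntropyIn]
  ring

theorem dualMutualInfo_additive_of_product_general (hρ : IsDensity ρ) {P Q : Finset (Finset ι)}
    (hPQ : Disjoint (P.sup id) (Q.sup id)) (hprod : IsProductAcross ρ (P.sup id) (Q.sup id)) :
    MI' ρ (P ∪ Q) = MI' ρ P + MI' ρ Q := by
  obtain ⟨hpos, htrace⟩ := hρ
  have hP : ∀ X ∈ P, condEntropyIn ρ X (P.sup id ∪ Q.sup id) = condEntropyIn ρ X (P.sup id) :=
    fun X hX => hprod.condEntropyIn_union_left hPQ hpos.isHermitian htrace (le_sup (f := id) hX)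
  have hQ : ∀ X ∈ Q, condEntropyIn ρ X (P.sup id ∪ Q.sup id) = condEntropyIn ρ X (Q.sup id) := by
    intro X hX
    rw [union_comm]
    exact hprod.symm.condEntropyIn_union_left hPQ.symm hpos.isHermitian htrace
      (le_sup (f := id) hX)
  simp only [MI'_eq_sub_sum_condEntropyIn, sup_union, sup_eq_union]
  rw [sum_union_of_disjoint_sup hPQ (f := (condEntropyIn ρ · _)) (condEntropyIn_empty ρ _),
    sum_congr rfl hP, sum_congr rfl hQ, hprod.Sv_union hPQ hpos.isHermitian htrace]
  ring

end DualMutualInformation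

/-- If a density operator is a product across the cut `s | sᶜ`,
i.e. `ρ = ρ^s ⊗ ρ^{sᶜ}`, then
`I'(A_1:⋯:A_n) = I'(parties in s) + I'(parties in sᶜ)` (in particular, for a four-partite
state with `ρ^{ABCD} = ρ^{AB}⊗ρ^{CD}`, `I'(A:B:C:D) = I'(A:B) + I'(C:D)`). -/
theorem dualMutualInfo_additive_of_product
    {ι : Type} [Fintype ι] [DecidableEq ι] {d : ι → Type}
    [∀ i, Fintype (d i)] [∀ i, DecidableEq (d i)]
    (ρ : Matrix (∀ i, d i) (∀ i, d i) ℂ) (hρ : IsDensity ρ) (s : Finset ι)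
    (hprod : ∀ x y : ∀ i, d i,
      ρ x y = pTr ρ s (fun i => x i.1) (fun i => y i.1)
                * pTr ρ sᶜ (fun i => x i.1) (fun i => y i.1)) :
    MI' ρ (finest Finset.univ) = MI' ρ (finest s) + MI' ρ (finest sᶜ) := by
  have hcut : IsProductAcross ρ s sᶜ := IsProductAcross.compl_iff.mpr hprod
  rw [← Finset.union_compl s, finest_union]
  exact dualMutualInfo_additive_of_product_general hρ
    (by simpa only [sup_finest] using disjoint_compl_right) (by simpa only [sup_finest] using hcut)
end

section
/- The dual multipartite quantum mutual information I' is neither completely monogamous nor tightly complete monogamous: the three-qubit density operator ρ = ½|000⟩⟨000| + ½|111⟩⟨111| satisfies I'(A:B:C) = I'(A:B) = 1 and I'(A:B:C) = I(A:BC) = 1, yet I(A:C) = I(B:C) = 1 > 0. -/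
open scoped BigOperators ComplexOrder
open Matrix

/-- The three-qubit state `ρ = ½|000⟩⟨000| + ½|111⟩⟨111|`. -/
noncomputable def ghzc3 : Matrix (∀ _ : Fin 3, Fin 2) (∀ _ : Fin 3, Fin 2) ℂ :=
  fun a b =>
    (if a = (fun _ => 0) ∧ b = (fun _ => 0) then (1 / 2 : ℂ) else 0)
      + (if a = (fun _ => 1) ∧ b = (fun _ => 1) then (1 / 2 : ℂ) else 0)

/-!
In the perfectly correlated state `∑ c, p c |c⋯c⟩⟨c⋯c|`, every nonempty set of parties carries a
copy of the same classical random variable: tracing out parties yields the correlated state on the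
remaining ones, whose nonzero spectrum is that of `p`. All reduced entropies therefore equal the
Shannon entropy `H(p)`, so `I'(X₁:⋯:X_k) = k H(p) - (k - 1) H(p) = H(p)` however many blocks there
are, whereas `I(X₁:⋯:X_k) = (k - 1) H(p)`, which for two blocks is `H(p)` as well. The state `ghzc3`
is the case of three parties and a fair bit, with `H(p) = 1`.
-/

section Entropy

theorem negxlog2_zero : negxlog2 0 = 0 := by
  simp [negxlog2]

theorem roots_charpoly_diagonal {n R : Type*} [Fintype n] [DecidableEq n] [CommRing R]
    [IsDomain R] (f : n → R) :
    (diagonal f).charpoly.roots = Finset.univ.val.map f := by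
  rw [charpoly_diagonal, ← Polynomial.roots_multiset_prod_X_sub_C (Finset.univ.val.map f),
    Multiset.map_map]
  rfl

variable {n : Type} [Fintype n] [DecidableEq n]

theorem vnEntropy_eq_sum_roots_charpoly {ρ : Matrix n n ℂ} (hρ : ρ.IsHermitian) :
    vnEntropy ρ = (ρ.charpoly.roots.map fun z => negxlog2 z.re).sum := by
  simp [vnEntropy, hρ, hρ.roots_charpoly_eq_eigenvalues]

theorem vnEntropy_diagonal_ofReal (f : n → ℝ) :
    vnEntropy (diagonal fun i => (f i : ℂ)) = ∑ i, negxlog2 (f i) := by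
  have hermitian : (diagonal fun i => (f i : ℂ)).IsHermitian :=
    isHermitian_diagonal_iff.2 fun i => Complex.conj_ofReal (f i)
  simp [vnEntropy_eq_sum_roots_charpoly hermitian, roots_charpoly_diagonal]

/-- The Shannon entropy, in bits, of a distribution `p` on a finite alphabet. It is defined for all
real weights: no normalization of `p` is built in. -/
noncomputable def shannonEntropy {α : Type*} [Fintype α] (p : α → ℝ) : ℝ :=
  ∑ c, negxlog2 (p c)

theorem shannonEntropy_uniform (α : Type*) [Fintype α] :
    shannonEntropy (fun _ : α => (Fintype.card α : ℝ)⁻¹) = Real.logb 2 (Fintype.card α) := by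
  rcases isEmpty_or_nonempty α with _ | _ <;> simp [shannonEntropy, negxlog2, Real.logb_inv]

theorem shannonEntropy_extend {α β : Type*} [Fintype α] [Fintype β] {f : α → β}
    (hf : Function.Injective f) (p : α → ℝ) :
    shannonEntropy (Function.extend f p 0) = shannonEntropy p := by
  refine (Fintype.sum_of_injective f hf _ _ (fun b hb => ?_) fun a => ?_).symm
  · rw [Function.extend_apply' _ _ _ hb, Pi.zero_apply, negxlog2_zero]
  · rw [hf.extend_apply]

end Entropy

section Partition

variable {ι : Type} [DecidableEq ι] {P : Finset (Finset ι)} {X : Finset ι}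

theorem isPartition_finest (s : Finset ι) : IsPartition (finest s) := by
  constructor
  · simp [finest]
  · intro X hX Y hY hXY
    obtain ⟨i, -, rfl⟩ := Finset.mem_image.1 hX
    obtain ⟨j, -, rfl⟩ := Finset.mem_image.1 hY
    exact Finset.disjoint_singleton.2 (ne_of_apply_ne _ hXY)

theorem IsPartition.sup_sdiff_nonempty (hP : IsPartition P) (hnt : P.Nontrivial) (hX : X ∈ P) :
    (P.sup id \ X).Nonempty := by
  obtain ⟨Y, hY, hYX⟩ := hnt.exists_ne X
  have subset_sdiff : Y ⊆ P.sup id \ X :=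
    Finset.subset_sdiff.2 ⟨Finset.le_sup (f := id) hY, hP.2 hY hX hYX⟩
  exact (hP.1 Y hY).mono subset_sdiff

end Partition

theorem combine_eq_const_iff {ι α : Type} [DecidableEq ι] {s : Finset ι} {x : {j // j ∈ s} → α}
    {z : {j // j ∉ s} → α} {c : α} :
    combine (d := fun _ => α) s x z = Function.const ι c ↔
      x = Function.const _ c ∧ z = Function.const _ c := by
  constructor
  · intro h
    refine ⟨funext fun i => ?_, funext fun i => ?_⟩ <;>
      simpa [combine, i.2] using congrFun h i
  · rintro ⟨rfl, rfl⟩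
    ext i
    simp [combine]

section CorrelatedState

variable {ι α : Type} [Fintype ι] [Fintype α] [DecidableEq α]

/-- The classically correlated state `∑ c, p c |c⋯c⟩⟨c⋯c|` of the parties `ι`, all of which have the
same basis labels `α`. It is a density operator when `p` is a probability distribution, but the
definition makes sense for arbitrary real weights. -/
noncomputable def correlatedState (ι : Type) [Fintype ι] (p : α → ℝ) :
    Matrix (ι → α) (ι → α) ℂ :=
  ∑ c, single (Function.const ι c) (Function.const ι c) (p c : ℂ)

theorem correlatedState_apply (p : α → ℝ) (x y : ι → α) :
    correlatedState ι p x y =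
      ∑ c, if x = Function.const ι c ∧ y = Function.const ι c then (p c : ℂ) else 0 := by
  simp only [correlatedState, Matrix.sum_apply, single_apply, eq_comm]

theorem correlatedState_eq_diagonal [Nonempty ι] (p : α → ℝ) :
    correlatedState ι p =
      diagonal fun x => ((Function.extend (Function.const ι) p 0 x : ℝ) : ℂ) := by
  ext x y
  rw [correlatedState_apply, diagonal_apply]
  by_cases hx : ∃ c, Function.const ι c = x
  · obtain ⟨c, rfl⟩ := hx
    simp only [Function.const_injective.extend_apply, Function.const_inj, ite_and,
      Finset.sum_ite_eq, Finset.mem_univ, if_true, eq_comm (a := y)]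
  · have not_const (c : α) : x ≠ Function.const ι c := fun h => hx ⟨c, h.symm⟩
    simp [Function.extend_apply' _ _ _ hx, not_const]

variable [DecidableEq ι]

theorem pTr_correlatedState (p : α → ℝ) (s : Finset ι) :
    pTr (d := fun _ => α) (correlatedState ι p) s = correlatedState {j // j ∈ s} p := by
  ext x y
  simp only [pTr, correlatedState_apply, combine_eq_const_iff]
  rw [Finset.sum_comm]
  refine Finset.sum_congr rfl fun c _ => ?_
  rw [Finset.sum_eq_single (Function.const _ c)]
  · simp only [and_true]
  · intro z _ hz
    simp [hz]
  · simp

theorem vnEntropy_correlatedState [Nonempty ι] (p : α → ℝ) :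
    vnEntropy (correlatedState ι p) = shannonEntropy p := by
  rw [correlatedState_eq_diagonal, vnEntropy_diagonal_ofReal]
  exact shannonEntropy_extend Function.const_injective p

theorem Sv_correlatedState (p : α → ℝ) {s : Finset ι} (hs : s.Nonempty) :
    Sv (d := fun _ => α) (correlatedState ι p) s = shannonEntropy p := by
  have : Nonempty {j // j ∈ s} := hs.to_subtype
  rw [Sv, pTr_correlatedState, vnEntropy_correlatedState]

theorem MI_correlatedState (p : α → ℝ) {P : Finset (Finset ι)} (hne : P.Nonempty)
    (hP : ∀ X ∈ P, X.Nonempty) :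
    MI (d := fun _ => α) (correlatedState ι p) P = (P.card - 1) * shannonEntropy p := by
  obtain ⟨X, hX⟩ := hne
  have sup_nonempty : (P.sup id).Nonempty := (hP X hX).mono (Finset.le_sup (f := id) hX)
  rw [MI, Sv_correlatedState p sup_nonempty,
    Finset.sum_congr rfl fun X hX => Sv_correlatedState p (hP X hX), Finset.sum_const,
    nsmul_eq_mul, sub_one_mul]

theorem MI'_correlatedState (p : α → ℝ) {P : Finset (Finset ι)} (hP : IsPartition P)
    (hnt : P.Nontrivial) :
    MI' (d := fun _ => α) (correlatedState ι p) P = shannonEntropy p := by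
  obtain ⟨X, hX⟩ := hnt.nonempty
  have sup_nonempty : (P.sup id).Nonempty :=
    (hP.sup_sdiff_nonempty hnt hX).mono Finset.sdiff_subset
  rw [MI', Sv_correlatedState p sup_nonempty,
    Finset.sum_congr rfl fun X hX => Sv_correlatedState p (hP.sup_sdiff_nonempty hnt hX),
    Finset.sum_const, nsmul_eq_mul]
  ring

end CorrelatedState

theorem ghzc3_eq_correlatedState :
    ghzc3 = correlatedState (Fin 3) fun _ : Fin 2 => (Fintype.card (Fin 2) : ℝ)⁻¹ := by
  ext x y
  simp only [ghzc3, correlatedState_apply, Fin.sum_univ_two, Function.const_def,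
    Function.const_apply, Fintype.card_fin, Nat.cast_ofNat, Complex.ofReal_inv,
    Complex.ofReal_ofNat, one_div]

theorem shannonEntropy_fair_bit :
    shannonEntropy (fun _ : Fin 2 => (Fintype.card (Fin 2) : ℝ)⁻¹) = 1 := by
  rw [shannonEntropy_uniform]
  simp

theorem MI_ghzc3_pair {X Y : Finset (Fin 3)} (hX : X.Nonempty) (hY : Y.Nonempty) (hXY : X ≠ Y) :
    MI ghzc3 {X, Y} = 1 := by
  have blocks_nonempty : ∀ Z ∈ ({X, Y} : Finset (Finset (Fin 3))), Z.Nonempty := by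
    simp [hX, hY]
  rw [ghzc3_eq_correlatedState, MI_correlatedState _ (Finset.insert_nonempty X {Y}) blocks_nonempty,
    Finset.card_pair hXY, shannonEntropy_fair_bit]
  norm_num

theorem MI'_ghzc3 {P : Finset (Finset (Fin 3))} (hP : IsPartition P) (hnt : P.Nontrivial) :
    MI' ghzc3 P = 1 := by
  rw [ghzc3_eq_correlatedState, MI'_correlatedState _ hP hnt, shannonEntropy_fair_bit]

/-- `I'` is neither completely monogamous nor tightly complete monogamous:
the three-qubit state `ρ = ½|000⟩⟨000| + ½|111⟩⟨111|` satisfies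
`I'(A:B:C) = I'(A:B) = 1` and `I'(A:B:C) = I(A:BC) = 1`, yet `I(A:C) = I(B:C) = 1 > 0`. -/
theorem dualMutualInfo_not_completely_monogamous :
    MI' ghzc3 {({0} : Finset (Fin 3)), {1}, {2}} = 1
    ∧ MI ghzc3 {({0} : Finset (Fin 3)), {1}} = 1
    ∧ MI ghzc3 {({0} : Finset (Fin 3)), {1, 2}} = 1
    ∧ MI ghzc3 {({0} : Finset (Fin 3)), {2}} = 1
    ∧ MI ghzc3 {({1} : Finset (Fin 3)), {2}} = 1
    ∧ 0 < MI ghzc3 {({0} : Finset (Fin 3)), {2}}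
    ∧ 0 < MI ghzc3 {({1} : Finset (Fin 3)), {2}} := by
  have dual : MI' ghzc3 {({0} : Finset (Fin 3)), {1}, {2}} = 1 :=
    MI'_ghzc3 (isPartition_finest Finset.univ) (Finset.one_lt_card_iff_nontrivial.1 (by decide))
  have pair_A_B : MI ghzc3 {({0} : Finset (Fin 3)), {1}} = 1 :=
    MI_ghzc3_pair (by simp) (by simp) (by decide)
  have pair_A_BC : MI ghzc3 {({0} : Finset (Fin 3)), {1, 2}} = 1 :=
    MI_ghzc3_pair (by simp) (by simp) (by decide)
  have pair_A_C : MI ghzc3 {({0} : Finset (Fin 3)), {2}} = 1 :=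
    MI_ghzc3_pair (by simp) (by simp) (by decide)
  have pair_B_C : MI ghzc3 {({1} : Finset (Fin 3)), {2}} = 1 :=
    MI_ghzc3_pair (by simp) (by simp) (by decide)
  exact ⟨dual, pair_A_B, pair_A_BC, pair_A_C, pair_B_C,
    pair_A_C ▸ one_pos, pair_B_C ▸ one_pos⟩
end
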